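/- For any n > 1, any compact polynomially convex set K ⊆ ℂⁿ, and any point p ∈ ℂⁿ \ K, there exists an injective holomorphic map φ : ℂⁿ → ℂⁿ with φ(0) = p whose image is disjoint from K. In particular, p lies in a Fatou–Bieberbach domain contained in ℂⁿ \ K. -/

import Mathlib

noncomputable section
open Set Metric MvPolynomial

/-- The polynomially convex hull of a set in `ℂⁿ`. -/
def polyHull {n : ℕ} (K : Set (EuclideanSpace ℂ (Fin n))) : Set (EuclideanSpace ℂ (Fin n)) :=
  {z | ∀ p : MvPolynomial (Fin n) ℂ,
    ‖eval (fun i => z i) p‖ ≤ sSup ((fun w => ‖eval (fun i => w i) p‖) '' K)}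

/-- A compact set in `ℂⁿ` is polynomially convex if it equals its polynomial hull. -/
def IsPolyConvex {n : ℕ} (K : Set (EuclideanSpace ℂ (Fin n))) : Prop :=
  polyHull K = K

/-- Polynomial hull for subsets of a product `ℂᴺ × ℂⁿ ≅ ℂ^{N+n}`, using polynomials in the
`N + n` coordinates. -/
def polyHull2 {N n : ℕ} (S : Set (EuclideanSpace ℂ (Fin N) × EuclideanSpace ℂ (Fin n))) :
    Set (EuclideanSpace ℂ (Fin N) × EuclideanSpace ℂ (Fin n)) :=
  {z | ∀ p : MvPolynomial (Fin N ⊕ Fin n) ℂ,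
    ‖eval (Sum.elim (fun i => z.1 i) (fun j => z.2 j)) p‖ ≤
      sSup ((fun w => ‖eval (Sum.elim (fun i => w.1 i) (fun j => w.2 j)) p‖) '' S)}

def IsPolyConvex2 {N n : ℕ} (S : Set (EuclideanSpace ℂ (Fin N) × EuclideanSpace ℂ (Fin n))) :
    Prop :=
  polyHull2 S = S

/-! If some biholomorphism `A` of `ℂⁿ` has `‖A z‖ < ‖A p‖` for all `z ∈ K`, then composing shears
that push the points of `A(K)` off to infinity while fixing `A p` gives, in the limit, a
Fatou–Bieberbach domain around `A p` that misses `A(K)`.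

To find `A`, take a polynomial `f` with `|f| < c` on `K` and `c < |f p|`. Powers of linear forms
span all polynomials, so every polynomial Hamiltonian field is a sum of shear fields and its flow is
approximated by compositions of shears. The fields built from high powers of `f` move a point where
`|f| ≥ c` in any direction while barely moving compact subsets of `{|f| < c}`. Hence the set of
points to which `p` can be moved by maps nearly equal to the identity on `K` is closed, and open
inside `{|f| > c}`; by the maximum principle it is unbounded.
-/

section SpanOfPowers

variable {𝕜 A V : Type*} [Field 𝕜] [CommRing A] [Algebra 𝕜 A] [AddCommGroup V] [Module 𝕜 V]

theorem mem_of_forall_sum_pow_smul_mem [Infinite 𝕜] {W : Submodule 𝕜 V} {n : ℕ} {v : ℕ → V}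
    (h : ∀ t : 𝕜, ∑ k ∈ Finset.range n, t ^ k • v k ∈ W) {k : ℕ} (hk : k < n) : v k ∈ W := by
  by_contra hmem
  obtain ⟨ψ, hψ, hker⟩ := W.exists_le_ker_of_notMem hmem
  let Q : Polynomial 𝕜 := ∑ j ∈ Finset.range n, Polynomial.monomial j (ψ (v j))
  have hQ : Q = 0 := Polynomial.funext fun t => by
    have ht : ψ (∑ j ∈ Finset.range n, t ^ j • v j) = 0 := hker (h t)
    simpa [Q, Polynomial.eval_finsetSum, mul_comm] using ht
  have hcoeff : Q.coeff k = ψ (v k) := by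
    simp [Q, Polynomial.finsetSum_coeff, Polynomial.coeff_monomial, hk]
  exact hψ (by rw [← hcoeff, hQ, Polynomial.coeff_zero])

theorem mul_pow_mem_of_forall_smul_add_pow_mem [CharZero 𝕜] {W : Submodule 𝕜 A} {x y : A} {d : ℕ}
    (h : ∀ t : 𝕜, (t • x + y) ^ (d + 1) ∈ W) : x * y ^ d ∈ W := by
  have hsum : ∀ t : 𝕜, ∑ k ∈ Finset.range (d + 2),
      t ^ k • (x ^ k * y ^ (d + 1 - k) * ((d + 1).choose k : A)) ∈ W := fun t => by
    simpa [add_pow, smul_pow] using h t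
  have hlin := mem_of_forall_sum_pow_smul_mem hsum (k := 1) (by omega)
  have hd : ((d : 𝕜) + 1) • (x * y ^ d) ∈ W := by
    convert! hlin using 1
    simp [Algebra.smul_def, mul_comm]
  exact (W.smul_mem_iff (Nat.cast_add_one_ne_zero d)).1 hd

/-- The linear span of the powers of the elements of `L`. -/
def powerSpan (L : Submodule 𝕜 A) : Submodule 𝕜 A :=
  Submodule.span 𝕜 {y | ∃ l ∈ L, ∃ d : ℕ, y = l ^ d}

theorem pow_mem_powerSpan {L : Submodule 𝕜 A} {l : A} (hl : l ∈ L) (d : ℕ) :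
    l ^ d ∈ powerSpan L :=
  Submodule.subset_span ⟨l, hl, d, rfl⟩

theorem mul_mem_powerSpan [CharZero 𝕜] {L : Submodule 𝕜 A} {x y : A} (hx : x ∈ L)
    (hy : y ∈ powerSpan L) : x * y ∈ powerSpan L := by
  suffices powerSpan L ≤ (powerSpan L).comap (LinearMap.mulLeft 𝕜 x) from this hy
  refine Submodule.span_le.2 ?_
  rintro _ ⟨l, hl, d, rfl⟩
  exact mul_pow_mem_of_forall_smul_add_pow_mem fun t =>
    pow_mem_powerSpan (L.add_mem (L.smul_mem t hx) hl) (d + 1)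

theorem adjoin_le_powerSpan [CharZero 𝕜] (L : Submodule 𝕜 A) :
    Subalgebra.toSubmodule (Algebra.adjoin 𝕜 (L : Set A)) ≤ powerSpan L := by
  rw [Algebra.adjoin_eq_span, Submodule.span_le]
  intro y hy
  induction hy using Submonoid.closure_induction_left with
  | one => simpa using pow_mem_powerSpan L.zero_mem 0
  | mul_left x hx y _ ih => exact mul_mem_powerSpan hx ih

end SpanOfPowers

section PolynomialFunctions

variable (E : Type*) [NormedAddCommGroup E] [NormedSpace ℂ E]

/-- The continuous linear functionals on `E`, as a subspace of the algebra of functions `E → ℂ`. -/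
def functionalSubmodule : Submodule ℂ (E → ℂ) :=
  LinearMap.range (LinearMap.ltoFun ℂ E ℂ ℂ ∘ₗ ContinuousLinearMap.coeLM ℂ)

/-- The polynomial functions on a complex normed space, defined without coordinates as the algebra
generated by the continuous linear functionals. -/
def polyFunctions : Subalgebra ℂ (E → ℂ) :=
  Algebra.adjoin ℂ (functionalSubmodule E)

variable {E}

theorem coe_mem_polyFunctions (l : E →L[ℂ] ℂ) : (l : E → ℂ) ∈ polyFunctions E :=
  Algebra.subset_adjoin ⟨l, rfl⟩

theorem differentiable_of_mem_polyFunctions {f : E → ℂ} (hf : f ∈ polyFunctions E) :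
    Differentiable ℂ f := by
  induction hf using Algebra.adjoin_induction with
  | mem _ hl =>
    obtain ⟨l, rfl⟩ := hl
    exact l.differentiable
  | algebraMap c => exact differentiable_const c
  | add _ _ _ _ hf hg => exact hf.add hg
  | mul _ _ _ _ hf hg => exact hf.mul hg

theorem eval_mem_polyFunctions {σ : Type*} (l : σ → E →L[ℂ] ℂ) (P : MvPolynomial σ ℂ) :
    (fun z => eval (fun i => l i z) P) ∈ polyFunctions E := by
  induction P using MvPolynomial.induction_on with
  | C c =>
    simp only [eval_C]
    exact (polyFunctions E).algebraMap_mem c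
  | add P Q hP hQ => simpa using! add_mem hP hQ
  | mul_X P i hP => simpa using! mul_mem hP (coe_mem_polyFunctions (l i))

theorem exists_mem_polyFunctions_of_notMem_polyHull {n : ℕ} {K : Set (EuclideanSpace ℂ (Fin n))}
    (hK : IsCompact K) {p : EuclideanSpace ℂ (Fin n)} (hp : p ∉ polyHull K) :
    ∃ f ∈ polyFunctions (EuclideanSpace ℂ (Fin n)), ∀ z ∈ K, ‖f z‖ < ‖f p‖ := by
  obtain ⟨P, hP⟩ : ∃ P : MvPolynomial (Fin n) ℂ,
      sSup ((fun w : EuclideanSpace ℂ (Fin n) => ‖eval (fun i => w i) P‖) '' K) <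
        ‖eval (fun i => p i) P‖ := by
    simpa [polyHull] using hp
  have hf := eval_mem_polyFunctions (fun i : Fin n => EuclideanSpace.proj (𝕜 := ℂ) i) P
  have hbdd := (hK.image (differentiable_of_mem_polyFunctions hf).continuous.norm).bddAbove
  exact ⟨_, hf, fun z hz => (le_csSup hbdd (mem_image_of_mem _ hz)).trans_lt hP⟩

end PolynomialFunctions

section EntireLimits

open Filter Topology

variable {E G : Type*} [NormedAddCommGroup E] [NormedSpace ℂ E] [NormedAddCommGroup G]
  [NormedSpace ℂ G]

theorem uniformCauchySeqOn_fderiv_ball {ι : Type*} {l : Filter ι} {F : ι → E → G}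
    (hF : ∀ i, Differentiable ℂ (F i)) {x : E} {r : ℝ} (hr : 0 < r)
    (h : UniformCauchySeqOn F l (ball x (r + r))) :
    UniformCauchySeqOn (fun i => fderiv ℂ (F i)) l (ball x r) := by
  intro u hu
  obtain ⟨ε, hε, hεu⟩ := Metric.mem_uniformity_dist.1 hu
  filter_upwards [h _ (Metric.dist_mem_uniformity (by positivity : 0 < r * ε / 4))] with m hm y hy
  have hmaps : MapsTo (F m.1 - F m.2) (ball y r)
      (closedBall ((F m.1 - F m.2) y) (r * ε / 4 + r * ε / 4)) := fun z hz => by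
    have hball : ball y r ⊆ ball x (r + r) :=
      ball_subset_ball' (by linarith [mem_ball.1 hy])
    have hzy := dist_triangle_right ((F m.1 - F m.2) z) ((F m.1 - F m.2) y) 0
    have hFz : dist (F m.1 z) (F m.2 z) < r * ε / 4 := hm z (hball hz)
    have hFy : dist (F m.1 y) (F m.2 y) < r * ε / 4 := hm y (hball (mem_ball_self hr))
    simp only [dist_zero_right, Pi.sub_apply, ← dist_eq_norm] at hzy
    exact mem_closedBall.2 (hzy.trans (add_le_add hFz.le hFy.le))
  have hschwarz := Complex.norm_fderiv_le_div_of_mapsTo_ball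
    ((hF m.1).sub (hF m.2)).differentiableOn hmaps hr
  refine hεu ?_
  rw [dist_eq_norm, ← fderiv_sub (hF m.1 y) (hF m.2 y)]
  refine hschwarz.trans_lt ?_
  field_simp
  linarith

theorem differentiableAt_of_tendstoUniformlyOn [CompleteSpace G] {ι : Type*} {l : Filter ι}
    [l.NeBot] {F : ι → E → G} {φ : E → G} (hF : ∀ i, Differentiable ℂ (F i)) {x : E} {s : Set E}
    (hs : s ∈ 𝓝 x) (h : TendstoUniformlyOn F φ l s) : DifferentiableAt ℂ φ x := by
  obtain ⟨r, hr, hrs⟩ := Metric.nhds_basis_ball.mem_iff.1 hs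
  have hcauchy : UniformCauchySeqOn (fun i => fderiv ℂ (F i)) l (ball x (r / 2)) :=
    uniformCauchySeqOn_fderiv_ball hF (half_pos hr)
      (by rw [add_halves]; exact (h.mono hrs).uniformCauchySeqOn)
  have hlim : ∀ y : E, ∃ g : E →L[ℂ] G, y ∈ ball x (r / 2) →
      Tendsto (fun i => fderiv ℂ (F i) y) l (𝓝 g) := fun y => by
    by_cases hy : y ∈ ball x (r / 2)
    · exact (CompleteSpace.complete (hcauchy.cauchy_map hy)).imp fun g hg _ => hg
    · exact ⟨0, fun h => absurd h hy⟩
  choose φ' hφ' using hlim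
  have hsub : ball x (r / 2) ⊆ s := (ball_subset_ball (half_le_self hr.le)).trans hrs
  exact (hasFDerivAt_of_tendstoUniformlyOn isOpen_ball
    (hcauchy.tendstoUniformlyOn_of_tendsto fun y hy => hφ' y hy)
    (fun i y _ => (hF i y).hasFDerivAt) (fun y hy => h.tendsto_at (hsub hy))
    (mem_ball_self (half_pos hr))).differentiableAt

theorem exists_differentiable_tendsto [CompleteSpace G] {F : ℕ → E → G} {u : ℕ → ℝ}
    (hF : ∀ k, Differentiable ℂ (F k)) (hu : Summable u)
    (hFu : ∀ ρ : ℝ, ∀ᶠ k in atTop, ∀ z ∈ ball 0 ρ, ‖F (k + 1) z - F k z‖ ≤ u k) :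
    ∃ φ : E → G, Differentiable ℂ φ ∧ ∀ z, Tendsto (fun k => F k z) atTop (𝓝 (φ z)) := by
  let φ : E → G := fun z => F 0 z + ∑' k, (F (k + 1) z - F k z)
  have hunif : ∀ ρ : ℝ, TendstoUniformlyOn F φ atTop (ball 0 ρ) := fun ρ => by
    have hconst : TendstoUniformlyOn (fun _ : ℕ => F 0) (F 0) atTop (ball 0 ρ) :=
      fun v hv => .of_forall fun _ _ _ => refl_mem_uniformity hv
    refine (hconst.add (tendstoUniformlyOn_tsum_nat_eventually hu (hFu ρ))).congr
      (.of_forall fun N z _ => ?_)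
    simp only [Pi.add_apply, Finset.sum_range_sub fun k => F k z, add_sub_cancel]
  have hmem : ∀ z : E, z ∈ ball 0 (‖z‖ + 1) := fun z => by simp
  exact ⟨φ, fun z => differentiableAt_of_tendstoUniformlyOn hF
    (isOpen_ball.mem_nhds (hmem z)) (hunif _), fun z => (hunif _).tendsto_at (hmem z)⟩

end EntireLimits

section Biholomorphisms

variable {E : Type*} [NormedAddCommGroup E] [NormedSpace ℂ E]

/-- A biholomorphic self-map of a complex normed space: a bijection which is entire together with
its inverse. -/
structure IsBiholo (e : E ≃ E) : Prop where
  differentiable : Differentiable ℂ e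
  differentiable_symm : Differentiable ℂ e.symm

theorem IsBiholo.refl : IsBiholo (Equiv.refl E) :=
  ⟨differentiable_id, differentiable_id⟩

theorem IsBiholo.trans {e e' : E ≃ E} (he : IsBiholo e) (he' : IsBiholo e') :
    IsBiholo (e.trans e') :=
  ⟨he'.differentiable.comp he.differentiable,
    he.differentiable_symm.comp he'.differentiable_symm⟩

theorem isBiholo_subRight (p : E) : IsBiholo (Equiv.subRight p) :=
  ⟨differentiable_id.sub_const p, differentiable_id.add_const p⟩

/-- The shear `z ↦ z + h (β z) • v` in a direction `v` of the kernel of the functional `β`. -/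
def shear (h : ℂ → ℂ) (β : E →L[ℂ] ℂ) (v : E) (hv : β v = 0) : E ≃ E where
  toFun z := z + h (β z) • v
  invFun z := z - h (β z) • v
  left_inv z := by simp [hv]
  right_inv z := by simp [hv]

theorem isBiholo_shear {h : ℂ → ℂ} (hh : Differentiable ℂ h) (β : E →L[ℂ] ℂ) (v : E)
    (hv : β v = 0) : IsBiholo (shear h β v hv) :=
  ⟨differentiable_id.add ((hh.comp β.differentiable).smul_const v),
    differentiable_id.sub ((hh.comp β.differentiable).smul_const v)⟩

/-- There is an injective entire self-map of `E` sending `0` to `p` whose image misses `K`. -/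
def HasAvoidingMap (K : Set E) (p : E) : Prop :=
  ∃ φ : E → E, Differentiable ℂ φ ∧ Function.Injective φ ∧ φ 0 = p ∧ ∀ ζ, φ ζ ∉ K

theorem HasAvoidingMap.of_image {A : E ≃ E} (hA : IsBiholo A) {K : Set E} {p : E}
    (h : HasAvoidingMap (A '' K) (A p)) : HasAvoidingMap K p := by
  obtain ⟨φ, hφ, hinj, hφ0, hφK⟩ := h
  exact ⟨A.symm ∘ φ, hA.differentiable_symm.comp hφ, A.symm.injective.comp hinj, by simp [hφ0],
    fun ζ hζ => hφK ζ ⟨_, hζ, A.apply_symm_apply _⟩⟩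

end Biholomorphisms

section LinearFunctionals

variable {E : Type*} [NormedAddCommGroup E] [NormedSpace ℂ E]

theorem exists_norm_eq_one_apply_eq_zero (hE : 1 < Module.finrank ℂ E) (a : E) :
    ∃ β : E →L[ℂ] ℂ, ‖β‖ = 1 ∧ β a = 0 := by
  have := FiniteDimensional.of_finrank_pos (zero_lt_one.trans hE)
  obtain ⟨f, hf, hfa⟩ := Submodule.exists_le_ker_of_lt_top (ℂ ∙ a)
    (span_lt_top_of_card_lt_finrank (by simpa using hE))
  have hf' : f.toContinuousLinearMap ≠ 0 := by simpa using hf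
  refine ⟨(‖f.toContinuousLinearMap‖⁻¹ : ℂ) • f.toContinuousLinearMap,
    norm_smul_inv_norm hf', ?_⟩
  have : f a = 0 := hfa (Submodule.mem_span_singleton_self a)
  simp [this]

theorem exists_apply_eq_one {β : E →L[ℂ] ℂ} (hβ : β ≠ 0) : ∃ b, β b = 1 :=
  LinearMap.surjective (f := β.toLinearMap) (ContinuousLinearMap.coe_injective.ne hβ) 1

theorem exists_dual_pair (hE : 1 < Module.finrank ℂ E) {β : E →L[ℂ] ℂ} (hβ : β ≠ 0) :
    ∃ (γ : E →L[ℂ] ℂ) (u v : E), ‖γ‖ = 1 ∧ β u = 1 ∧ β v = 0 ∧ γ u = 0 ∧ γ v = 1 := by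
  obtain ⟨u, hu⟩ := exists_apply_eq_one hβ
  obtain ⟨γ, hγ, hγu⟩ := exists_norm_eq_one_apply_eq_zero hE u
  obtain ⟨w, hw⟩ := exists_apply_eq_one (norm_ne_zero_iff.1 (hγ ▸ one_ne_zero))
  exact ⟨γ, u, w - β w • u, hγ, hu, by simp [hu], hγu, by simp [hw, hγu]⟩

end LinearFunctionals

section PushOut

open Filter Topology

variable {E : Type*} [NormedAddCommGroup E] [NormedSpace ℂ E]

theorem exists_entire_small_large {R R₂ : ℝ} (hR : 0 ≤ R) (hR₂ : R < R₂) {ε : ℝ} (hε : 0 < ε)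
    (M : ℝ) : ∃ h : ℂ → ℂ, Differentiable ℂ h ∧ h 0 = 0 ∧ (∀ w, ‖w‖ ≤ R → ‖h w‖ ≤ ε) ∧
      ∀ w, R₂ ≤ ‖w‖ → M < ‖h w‖ := by
  obtain ⟨R₁, hRR₁, hR₁R₂⟩ := exists_between hR₂
  have hR₁ : 0 < R₁ := hR.trans_lt hRR₁
  have hsmall : Tendsto (fun N : ℕ => (R / R₁) ^ N) atTop (𝓝 0) :=
    tendsto_pow_atTop_nhds_zero_of_lt_one (by positivity) ((div_lt_one hR₁).2 hRR₁)
  have hlarge : Tendsto (fun N : ℕ => (R₂ / R₁) ^ N) atTop atTop :=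
    tendsto_pow_atTop_atTop_of_one_lt ((one_lt_div hR₁).2 hR₁R₂)
  obtain ⟨N, hNε, hNM, hN⟩ := ((hsmall.eventually (gt_mem_nhds hε)).and
    ((hlarge.eventually_gt_atTop M).and (eventually_ne_atTop 0))).exists
  have hnorm : ∀ w : ℂ, ‖(w / R₁) ^ N‖ = (‖w‖ / R₁) ^ N := fun w => by simp [abs_of_pos hR₁]
  refine ⟨fun w => (w / R₁) ^ N, by fun_prop, by simp [hN], fun w hw => ?_, fun w hw => ?_⟩
  · rw [hnorm]
    exact le_trans (by gcongr) hNε.le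
  · rw [hnorm]
    have : 0 ≤ R₂ := hR.trans hR₂.le
    exact hNM.trans_le (by gcongr)

theorem exists_isBiholo_pushing {K : Set E} (hK : IsCompact K) {β β' : E →L[ℂ] ℂ} {v : E}
    (hv : β v = 0) (hv' : β' v = 1) {R : ℝ} (hR : 0 ≤ R) (hKR : ∀ z ∈ K, R < ‖β z‖) (R' : ℝ)
    {ε : ℝ} (hε : 0 < ε) :
    ∃ G : E ≃ E, IsBiholo G ∧ G 0 = 0 ∧ (∀ z, ‖β z‖ ≤ R → ‖G.symm z - z‖ ≤ ε) ∧
      ∀ z ∈ K, R' < ‖β' (G z)‖ := by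
  obtain ⟨R₂, hR₂, hKR₂⟩ := hK.exists_forall_le' (by fun_prop) hKR
  obtain ⟨B, hB⟩ := hK.exists_bound_of_continuousOn (f := β') (by fun_prop)
  obtain ⟨h, hh, hh0, hsmall, hlarge⟩ :=
    exists_entire_small_large hR hR₂ (show 0 < ε / (‖v‖ + 1) by positivity) (R' + B)
  refine ⟨shear h β v hv, isBiholo_shear hh β v hv, by simp [shear, hh0], fun z hz => ?_,
    fun z hz => ?_⟩
  · calc ‖(shear h β v hv).symm z - z‖ = ‖h (β z)‖ * ‖v‖ := by simp [shear, norm_smul]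
      _ ≤ ε / (‖v‖ + 1) * (‖v‖ + 1) := by
        gcongr
        exacts [hsmall _ hz, le_add_of_nonneg_right zero_le_one]
      _ = ε := div_mul_cancel₀ _ (by positivity)
  · have hshear : β' (shear h β v hv z) = h (β z) + β' z := by
      simp [shear, hv', add_comm]
    rw [hshear]
    linarith [hlarge _ (hKR₂ z hz), hB z hz, norm_sub_le_norm_add (h (β z)) (β' z)]

/-- A sequence of biholomorphisms, fixing the origin, whose consecutive steps `e k ∘ (e (k + 1))⁻¹`
are so close to the identity on growing balls that the inverses `(e k)⁻¹` converge, locally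
uniformly, to a map which the `e k` asymptotically invert. -/
structure IsPushOutSeq (e : ℕ → E ≃ E) : Prop where
  isBiholo : ∀ k, IsBiholo (e k)
  map_zero : ∀ k, e k 0 = 0
  norm_symm_sub_symm_le : ∀ (k : ℕ) (z : E), ‖z‖ ≤ k →
    ‖(e (k + 1)).symm z - (e k).symm z‖ ≤ (1 / 2) ^ k
  norm_apply_symm_sub_le : ∀ (k : ℕ) (z : E), ‖z‖ ≤ k →
    ‖e k ((e (k + 1)).symm z) - z‖ ≤ (1 / 2) ^ (k + 1)

namespace IsPushOutSeq

variable {e : ℕ → E ≃ E}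

theorem norm_apply_symm_add_sub_le (he : IsPushOutSeq e) (d k : ℕ) (z : E) (hz : ‖z‖ + 1 ≤ k) :
    ‖e k ((e (k + d)).symm z) - z‖ ≤ (1 / 2) ^ k := by
  induction d generalizing k with
  | zero => simp
  | succ d ih =>
    set w := e (k + 1) ((e (k + (d + 1))).symm z) with hw
    have hwz : ‖w - z‖ ≤ (1 / 2) ^ (k + 1) := by
      simpa only [hw, add_assoc, add_comm 1 d] using ih (k + 1) (by push_cast; linarith)
    have hwk : ‖w‖ ≤ k := by
      have := pow_le_one₀ (n := k + 1) (show (0 : ℝ) ≤ 1 / 2 by norm_num) (by norm_num)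
      linarith [norm_le_insert' w z]
    have hkw := he.norm_apply_symm_sub_le k w hwk
    rw [hw, Equiv.symm_apply_apply, ← hw] at hkw
    calc _ ≤ _ := norm_sub_le_norm_sub_add_norm_sub _ w _
      _ ≤ (1 / 2) ^ (k + 1) + (1 / 2) ^ (k + 1) := add_le_add hkw hwz
      _ = _ := by ring

theorem exists_differentiable_tendsto_symm [CompleteSpace E] (he : IsPushOutSeq e) :
    ∃ φ : E → E, Differentiable ℂ φ ∧ ∀ z, Tendsto (fun k => (e k).symm z) atTop (𝓝 (φ z)) := by
  refine exists_differentiable_tendsto (fun k => (he.isBiholo k).differentiable_symm)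
    (summable_geometric_of_lt_one (by norm_num) (by norm_num : (1 / 2 : ℝ) < 1)) fun ρ => ?_
  filter_upwards [tendsto_natCast_atTop_atTop.eventually_ge_atTop ρ] with k hk z hz
  exact he.norm_symm_sub_symm_le k z ((mem_ball_zero_iff.1 hz).le.trans hk)

theorem norm_apply_limit_sub_le (he : IsPushOutSeq e) {z x : E}
    (hx : Tendsto (fun k => (e k).symm z) atTop (𝓝 x)) {k : ℕ} (hz : ‖z‖ + 1 ≤ k) :
    ‖e k x - z‖ ≤ (1 / 2) ^ k := by
  have hshift : Tendsto (fun d => (e (k + d)).symm z) atTop (𝓝 x) := by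
    simpa only [add_comm] using (tendsto_add_atTop_iff_nat k).2 hx
  have hcont := (he.isBiholo k).differentiable.continuous.tendsto x
  exact le_of_tendsto ((hcont.comp hshift).sub_const z).norm
    (.of_forall fun d => he.norm_apply_symm_add_sub_le d k z hz)

theorem tendsto_apply_limit (he : IsPushOutSeq e) {z x : E}
    (hx : Tendsto (fun k => (e k).symm z) atTop (𝓝 x)) :
    Tendsto (fun k => e k x) atTop (𝓝 z) := by
  refine tendsto_iff_norm_sub_tendsto_zero.2 (squeeze_zero' (.of_forall fun _ => norm_nonneg _) ?_
    (tendsto_pow_atTop_nhds_zero_of_lt_one (by norm_num) (by norm_num : (1 / 2 : ℝ) < 1)))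
  filter_upwards [tendsto_natCast_atTop_atTop.eventually_ge_atTop (‖z‖ + 1)] with k hk
  exact he.norm_apply_limit_sub_le hx hk

theorem hasAvoidingMap [CompleteSpace E] (he : IsPushOutSeq e) {K : Set E}
    (hK : ∀ z ∈ K, Tendsto (fun k => ‖e k z‖) atTop atTop) : HasAvoidingMap K 0 := by
  obtain ⟨φ, hφ, hlim⟩ := he.exists_differentiable_tendsto_symm
  refine ⟨φ, hφ, fun z w hzw => ?_, ?_, fun z hz => ?_⟩
  · have hw := he.tendsto_apply_limit (hlim w)
    rw [← hzw] at hw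
    exact tendsto_nhds_unique (he.tendsto_apply_limit (hlim z)) hw
  · refine tendsto_nhds_unique (hlim 0) (tendsto_const_nhds.congr fun k => ?_)
    rw [eq_comm, Equiv.symm_apply_eq, he.map_zero]
  · exact not_tendsto_nhds_of_tendsto_atTop (hK _ hz) _ (he.tendsto_apply_limit (hlim z)).norm

end IsPushOutSeq

theorem exists_pushOut_step [ProperSpace E] {K : Set E} (hK : IsCompact K) {β β' : E →L[ℂ] ℂ}
    (hβ : ‖β‖ = 1) {v : E} (hv : β v = 0) (hv' : β' v = 1) {e : E ≃ E} (he : IsBiholo e)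
    (he0 : e 0 = 0) {k : ℕ} (heK : ∀ z ∈ K, k < ‖β (e z)‖) :
    ∃ e' : E ≃ E, (IsBiholo e' ∧ e' 0 = 0 ∧ ∀ z ∈ K, k + 1 < ‖β' (e' z)‖) ∧
      ∀ z : E, ‖z‖ ≤ k → ‖e'.symm z - e.symm z‖ ≤ (1 / 2) ^ k ∧
        ‖e (e'.symm z) - z‖ ≤ (1 / 2) ^ (k + 1) := by
  have hcont : ContinuousOn e.symm (closedBall 0 (k + 1)) :=
    he.differentiable_symm.continuous.continuousOn
  obtain ⟨δ, hδ, hunif⟩ := Metric.uniformContinuousOn_iff_le.1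
    ((isCompact_closedBall (0 : E) (k + 1)).uniformContinuousOn_of_continuous hcont)
    ((1 / 2) ^ k) (by positivity)
  obtain ⟨G, hG, hG0, hGsymm, hGK⟩ :=
    exists_isBiholo_pushing (hK.image he.differentiable.continuous) hv hv' k.cast_nonneg
      (forall_mem_image.2 heK) (k + 1) (show 0 < min δ ((1 / 2) ^ (k + 1)) by positivity)
  refine ⟨e.trans G, ⟨he.trans hG, by simp [he0, hG0],
    fun z hz => hGK _ (mem_image_of_mem e hz)⟩, fun z hz => ?_⟩
  obtain ⟨hGδ, hGk⟩ := le_min_iff.1 (hGsymm z ((β.le_of_opNorm_le hβ.le z).trans (by linarith)))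
  refine ⟨?_, by simpa using hGk⟩
  have hpow := pow_le_one₀ (n := k + 1) (show (0 : ℝ) ≤ 1 / 2 by norm_num) (by norm_num)
  have hGz : ‖G.symm z‖ ≤ k + 1 := by linarith [norm_le_insert' (G.symm z) z]
  simpa [dist_eq_norm] using hunif (G.symm z) (by simpa using hGz) z
    (by simpa using hz.trans (by linarith)) (by rwa [dist_eq_norm])

theorem exists_isPushOutSeq [ProperSpace E] {K : Set E} (hK : IsCompact K) {β : ℕ → E →L[ℂ] ℂ}
    (hβ : ∀ k, ‖β k‖ = 1) {v : ℕ → E} (hv : ∀ k, β k (v k) = 0) (hv' : ∀ k, β (k + 1) (v k) = 1)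
    (hβK : ∀ z ∈ K, β 0 z ≠ 0) :
    ∃ e : ℕ → E ≃ E, IsPushOutSeq e ∧ ∀ k, ∀ z ∈ K, k < ‖β k (e k z)‖ := by
  have hstep : ∀ k (e : E ≃ E), (IsBiholo e ∧ e 0 = 0 ∧ ∀ z ∈ K, k < ‖β k (e z)‖) → _ :=
    fun k e he => exists_pushOut_step hK (hβ k) (hv k) (hv' k) he.1 he.2.1 he.2.2
  choose! next hnext hclose using hstep
  let e : ℕ → E ≃ E := fun k => Nat.rec (Equiv.refl E) next k
  have he : ∀ k, IsBiholo (e k) ∧ e k 0 = 0 ∧ ∀ z ∈ K, k < ‖β k (e k z)‖ := fun k => by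
    induction k with
    | zero => exact ⟨IsBiholo.refl, rfl, fun z hz => by simpa [e] using hβK z hz⟩
    | succ k ih => exact_mod_cast hnext k _ ih
  exact ⟨e, ⟨fun k => (he k).1, fun k => (he k).2.1, fun k z hz => (hclose k _ (he k) z hz).1,
    fun k z hz => (hclose k _ (he k) z hz).2⟩, fun k => (he k).2.2⟩

theorem hasAvoidingMap_of_forall_apply_ne_zero [ProperSpace E] (hE : 1 < Module.finrank ℂ E)
    {K : Set E} (hK : IsCompact K) {β : E →L[ℂ] ℂ} (hβ : ‖β‖ = 1) (hβK : ∀ z ∈ K, β z ≠ 0) :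
    HasAvoidingMap K 0 := by
  obtain ⟨γ, u, v, hγ, hβu, hβv, hγu, hγv⟩ :=
    exists_dual_pair hE (norm_ne_zero_iff.1 (hβ ▸ one_ne_zero))
  let α : ℕ → E →L[ℂ] ℂ := fun k => if Even k then β else γ
  have hα : ∀ k, ‖α k‖ = 1 := fun k => by by_cases hk : Even k <;> simp [α, hk, hβ, hγ]
  obtain ⟨e, he, heK⟩ := exists_isPushOutSeq hK (β := α) hα
    (v := fun k => if Even k then v else u)
    (fun k => by by_cases hk : Even k <;> simp [α, hk, hβv, hγu])
    (fun k => by by_cases hk : Even k <;> simp [α, hk, Nat.even_add_one, hβu, hγv])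
    (by simpa [α] using hβK)
  exact he.hasAvoidingMap fun z hz => tendsto_atTop_mono
    (fun k => (heK k z hz).le.trans ((α k).le_of_opNorm_le (hα k).le _ |>.trans (one_mul _).le))
    tendsto_natCast_atTop_atTop

theorem hasAvoidingMap_of_forall_norm_lt (hE : 1 < Module.finrank ℂ E) {K : Set E}
    (hK : IsCompact K) {p : E} (hKp : ∀ z ∈ K, ‖z‖ < ‖p‖) : HasAvoidingMap K p := by
  have := Module.nontrivial_of_finrank_pos (zero_lt_one.trans hE)
  have := FiniteDimensional.of_finrank_pos (zero_lt_one.trans hE)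
  have := FiniteDimensional.proper ℂ E
  obtain ⟨β, hβ, hβp⟩ := exists_dual_vector' ℂ p
  refine HasAvoidingMap.of_image (isBiholo_subRight p) ?_
  rw [Equiv.subRight_apply, sub_self]
  refine hasAvoidingMap_of_forall_apply_ne_zero hE
    (hK.image (isBiholo_subRight p).differentiable.continuous) hβ ?_
  rintro _ ⟨z, hz, rfl⟩ hβz
  have hβz' : β z = ‖p‖ := by simpa [sub_eq_zero, hβp] using hβz
  have hle := β.le_of_opNorm_le hβ.le z
  rw [hβz', Complex.norm_real, norm_norm, one_mul] at hle
  exact (hKp z hz).not_ge hle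

end PushOut

section ApproximateFlows

open Filter Topology

variable {E : Type*} [NormedAddCommGroup E] [NormedSpace ℂ E]

/-- A family of biholomorphisms which, to first order in the complex time `t` and locally
uniformly, is the flow of the vector field `X`. -/
structure IsApproxFlow (A : ℂ → E ≃ E) (X : E → E) : Prop where
  isBiholo : ∀ t, IsBiholo (A t)
  eventually_norm_sub_le : ∀ L : Set E, IsCompact L → ∀ ε > 0, ∀ᶠ t in 𝓝 0, ∀ z ∈ L,
    ‖A t z - z - t • X z‖ ≤ ε * ‖t‖

namespace IsApproxFlow

theorem refl : IsApproxFlow (fun _ => Equiv.refl E) 0 where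
  isBiholo _ := IsBiholo.refl
  eventually_norm_sub_le L _ ε hε := .of_forall fun t z _ => by simpa using by positivity

theorem shear {h : ℂ → ℂ} (hh : Differentiable ℂ h) (β : E →L[ℂ] ℂ) {v : E} (hv : β v = 0) :
    IsApproxFlow (fun t => shear (fun w => t * h w) β v hv) fun z => h (β z) • v where
  isBiholo t := isBiholo_shear (hh.const_mul t) β v hv
  eventually_norm_sub_le L _ ε hε := .of_forall fun t z _ => by
    simpa [_root_.shear, mul_smul] using by positivity

theorem smul {A : ℂ → E ≃ E} {X : E → E} (hA : IsApproxFlow A X) (c : ℂ) :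
    IsApproxFlow (fun t => A (c * t)) (c • X) where
  isBiholo t := hA.isBiholo (c * t)
  eventually_norm_sub_le L hL ε hε := by
    have hct : Tendsto (fun t => c * t) (𝓝 0) (𝓝 0) := by
      simpa using (continuous_const_mul c).tendsto 0
    filter_upwards [hct.eventually
      (hA.eventually_norm_sub_le L hL (ε / (‖c‖ + 1)) (by positivity))] with t ht z hz
    calc ‖A (c * t) z - z - t • (c • X) z‖ = ‖A (c * t) z - z - (c * t) • X z‖ := by
          rw [Pi.smul_apply, smul_smul, mul_comm]
      _ ≤ ε / (‖c‖ + 1) * ((‖c‖ + 1) * ‖t‖) := by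
          refine (ht z hz).trans ?_
          rw [norm_mul]
          gcongr
          exact le_add_of_nonneg_right zero_le_one
      _ = ε * ‖t‖ := by field_simp

theorem eventually_forall_norm_sub_le {A : ℂ → E ≃ E} {X : E → E} (hA : IsApproxFlow A X)
    (hX : Continuous X) {L : Set E} (hL : IsCompact L) {δ : ℝ} (hδ : 0 < δ) :
    ∀ᶠ t in 𝓝 0, ∀ z ∈ L, ‖A t z - z‖ ≤ δ := by
  obtain ⟨B, hB⟩ := hL.exists_bound_of_continuousOn hX.continuousOn
  have hsmall : Tendsto (fun t : ℂ => 1 * ‖t‖ + ‖t‖ * B) (𝓝 0) (𝓝 0) := by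
    have : Continuous fun t : ℂ => 1 * ‖t‖ + ‖t‖ * B := by fun_prop
    simpa using this.tendsto 0
  filter_upwards [hA.eventually_norm_sub_le L hL 1 one_pos, hsmall.eventually (ge_mem_nhds hδ)]
    with t ht htδ z hz
  calc ‖A t z - z‖ ≤ ‖A t z - z - t • X z‖ + ‖t • X z‖ := norm_le_norm_sub_add _ _
    _ ≤ 1 * ‖t‖ + ‖t‖ * B := by
      rw [norm_smul]
      gcongr
      exacts [ht z hz, hB z hz]
    _ ≤ δ := htδ

theorem add [ProperSpace E] {A B : ℂ → E ≃ E} {X Y : E → E} (hA : IsApproxFlow A X)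
    (hB : IsApproxFlow B Y) (hX : Continuous X) (hY : Continuous Y) :
    IsApproxFlow (fun t => (A t).trans (B t)) (X + Y) where
  isBiholo t := (hA.isBiholo t).trans (hB.isBiholo t)
  eventually_norm_sub_le L hL ε hε := by
    have hL' : IsCompact (cthickening 1 L) := hL.cthickening
    obtain ⟨δ, hδ, hYδ⟩ := Metric.uniformContinuousOn_iff_le.1
      (hL'.uniformContinuousOn_of_continuous hY.continuousOn) (ε / 3) (by positivity)
    filter_upwards [hA.eventually_norm_sub_le L hL (ε / 3) (by positivity),
      hB.eventually_norm_sub_le _ hL' (ε / 3) (by positivity),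
      hA.eventually_forall_norm_sub_le hX hL (lt_min hδ one_pos)] with t hAt hBt hw z hz
    obtain ⟨hwδ, hw1⟩ := le_min_iff.1 (hw z hz)
    rw [← dist_eq_norm] at hwδ hw1
    have hwL : A t z ∈ cthickening 1 L := mem_cthickening_of_dist_le _ z 1 L hz hw1
    have hY : ‖Y (A t z) - Y z‖ ≤ ε / 3 := by
      simpa [dist_eq_norm] using hYδ _ hwL z (self_subset_cthickening L hz) hwδ
    calc ‖B t (A t z) - z - t • (X + Y) z‖
        = ‖(B t (A t z) - A t z - t • Y (A t z)) + (A t z - z - t • X z) +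
            t • (Y (A t z) - Y z)‖ := by rw [Pi.add_apply]; congr 1; module
      _ ≤ ε / 3 * ‖t‖ + ε / 3 * ‖t‖ + ‖t‖ * (ε / 3) := by
        refine norm_add₃_le.trans ?_
        rw [norm_smul]
        gcongr
        exacts [hBt _ hwL, hAt z hz]
      _ = ε * ‖t‖ := by ring

end IsApproxFlow

variable (E) in
/-- The continuous vector fields that are the flow direction of some approximate flow. -/
def approxFlowFields [ProperSpace E] : Submodule ℂ (E → E) where
  carrier := {X | Continuous X ∧ ∃ A, IsApproxFlow A X}
  zero_mem' := ⟨continuous_zero, _, IsApproxFlow.refl⟩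
  add_mem' := fun ⟨hX, _, hA⟩ ⟨hY, _, hB⟩ => ⟨hX.add hY, _, hA.add hB hX hY⟩
  smul_mem' := fun c _ ⟨hX, _, hA⟩ => ⟨hX.const_smul c, _, hA.smul c⟩

theorem shearField_mem_approxFlowFields [ProperSpace E] {h : ℂ → ℂ} (hh : Differentiable ℂ h)
    (β : E →L[ℂ] ℂ) {v : E} (hv : β v = 0) : (fun z => h (β z) • v) ∈ approxFlowFields E :=
  ⟨(hh.continuous.comp β.continuous).smul continuous_const, _, IsApproxFlow.shear hh β hv⟩

end ApproximateFlows

section HamiltonianFields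

open Filter Topology

variable {E : Type*} [NormedAddCommGroup E] [NormedSpace ℂ E]

/-- The Hamiltonian vector field `∂_b g • a - ∂_a g • b` of the function `g` with respect to the
plane spanned by `a` and `b`. -/
def hamiltonianField (a b : E) (g : E → ℂ) (z : E) : E :=
  fderiv ℂ g z b • a - fderiv ℂ g z a • b

theorem hamiltonianField_add (a b : E) {g k : E → ℂ} (hg : Differentiable ℂ g)
    (hk : Differentiable ℂ k) :
    hamiltonianField a b (g + k) = hamiltonianField a b g + hamiltonianField a b k := by
  ext1 z
  simp only [hamiltonianField, Pi.add_apply, fderiv_add (hg z) (hk z), add_apply]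
  module

theorem hamiltonianField_smul (a b : E) (c : ℂ) {g : E → ℂ} (hg : Differentiable ℂ g) :
    hamiltonianField a b (c • g) = c • hamiltonianField a b g := by
  ext1 z
  simp only [hamiltonianField, Pi.smul_apply, fderiv_const_smul (hg z), smul_apply, smul_eq_mul]
  module

theorem hamiltonianField_mul (a b : E) {g k : E → ℂ} (hg : Differentiable ℂ g)
    (hk : Differentiable ℂ k) (z : E) :
    hamiltonianField a b (g * k) z =
      g z • hamiltonianField a b k z + k z • hamiltonianField a b g z := by
  simp only [hamiltonianField, fderiv_mul (hg z) (hk z), add_apply, smul_apply, smul_eq_mul]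
  module

theorem hamiltonianField_pow (a b : E) {g : E → ℂ} (hg : Differentiable ℂ g) (n : ℕ) (z : E) :
    hamiltonianField a b (g ^ n) z = (n * g z ^ (n - 1)) • hamiltonianField a b g z := by
  simp only [hamiltonianField, fderiv_pow n (hg z), smul_apply, smul_eq_mul, nsmul_eq_mul]
  module

theorem hamiltonianField_const (a b : E) (c : ℂ) : hamiltonianField a b (fun _ => c) = 0 := by
  ext1 z
  simp [hamiltonianField]

theorem hamiltonianField_coe (a b : E) (l : E →L[ℂ] ℂ) (z : E) :
    hamiltonianField a b l z = l b • a - l a • b := by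
  rw [hamiltonianField, l.fderiv]

theorem hamiltonianField_coe_pow_mem_approxFlowFields [ProperSpace E] (a b : E) (l : E →L[ℂ] ℂ)
    (n : ℕ) : hamiltonianField a b (⇑l ^ n) ∈ approxFlowFields E := by
  have hfield : hamiltonianField a b (⇑l ^ n) =
      fun z => (n * l z ^ (n - 1)) • (l b • a - l a • b) := by
    ext1 z
    rw [hamiltonianField_pow a b l.differentiable, hamiltonianField_coe]
  rw [hfield]
  exact shearField_mem_approxFlowFields (h := fun w => n * w ^ (n - 1)) (by fun_prop) l
    (by simp [mul_comm])

theorem hamiltonianField_mem_of_mem_powerSpan [ProperSpace E] (a b : E) {g : E → ℂ}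
    (hg : g ∈ powerSpan (functionalSubmodule E)) :
    Differentiable ℂ g ∧ hamiltonianField a b g ∈ approxFlowFields E := by
  induction hg using Submodule.span_induction with
  | mem _ hg =>
    obtain ⟨_, ⟨l, rfl⟩, d, rfl⟩ := hg
    exact ⟨l.differentiable.pow d, hamiltonianField_coe_pow_mem_approxFlowFields a b l d⟩
  | zero => exact ⟨differentiable_const 0, (hamiltonianField_const a b 0).symm ▸ zero_mem _⟩
  | add g k _ _ hg hk =>
    exact ⟨hg.1.add hk.1, hamiltonianField_add a b hg.1 hk.1 ▸ add_mem hg.2 hk.2⟩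
  | smul c g _ hg =>
    exact ⟨hg.1.const_smul c,
      hamiltonianField_smul a b c hg.1 ▸ Submodule.smul_mem _ c hg.2⟩

theorem hamiltonianField_mem_approxFlowFields [ProperSpace E] (a b : E) {g : E → ℂ}
    (hg : g ∈ polyFunctions E) : hamiltonianField a b g ∈ approxFlowFields E :=
  (hamiltonianField_mem_of_mem_powerSpan a b (adjoin_le_powerSpan _ hg)).2

theorem hamiltonianField_sub_const_mul_pow {a b : E} {β : E →L[ℂ] ℂ} (hβa : β a = 0)
    (hβb : β b = 1) (c : ℂ) {h : E → ℂ} (hh : Differentiable ℂ h) (m : ℕ) (z : E) :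
    hamiltonianField a b ((fun z => β z - c) * h ^ (m + 1)) z =
      h z ^ (m + 1) • a + ((m + 1) * h z ^ m) • (β z - c) • hamiltonianField a b h z := by
  have hβ : hamiltonianField a b (fun z => β z - c) z = a := by
    simp [hamiltonianField, fderiv_sub_const, hβa, hβb]
  rw [hamiltonianField_mul a b (β.differentiable.sub_const c) (hh.pow _), hβ,
    hamiltonianField_pow a b hh]
  simp only [Pi.pow_apply, add_tsub_cancel_right, Nat.cast_succ]
  module

theorem exists_lt_forall_norm_le {α G : Type*} [TopologicalSpace α] [SeminormedAddCommGroup G]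
    {L : Set α} (hL : IsCompact L) {f : α → G} (hf : ContinuousOn f L) {c : ℝ} (hc : 0 < c)
    (hfL : ∀ z ∈ L, ‖f z‖ < c) : ∃ θ, 0 ≤ θ ∧ θ < c ∧ ∀ z ∈ L, ‖f z‖ ≤ θ := by
  obtain ⟨δ, hδ, hδL⟩ := hL.exists_forall_le' (f := fun z => c - ‖f z‖) (a := 0)
    (by fun_prop) fun z hz => sub_pos.2 (hfL z hz)
  exact ⟨max 0 (c - δ), le_max_left _ _, by simp [hδ, hc],
    fun z hz => le_max_of_le_right (by linarith [hδL z hz])⟩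

theorem exists_mem_approxFlowFields_apply_eq [ProperSpace E] (hE : 1 < Module.finrank ℂ E)
    {h : E → ℂ} (hh : h ∈ polyFunctions E) {w : E} (hw : h w = 1) {L : Set E} (hL : IsCompact L)
    (hhL : ∀ z ∈ L, ‖h z‖ < 1) (a : E) {ε : ℝ} (hε : 0 < ε) :
    ∃ X ∈ approxFlowFields E, X w = a ∧ ∀ z ∈ L, ‖X z‖ ≤ ε := by
  obtain ⟨β, hβ, hβa⟩ := exists_norm_eq_one_apply_eq_zero hE a
  obtain ⟨b, hβb⟩ := exists_apply_eq_one (norm_ne_zero_iff.1 (hβ ▸ one_ne_zero))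
  have hhd := differentiable_of_mem_polyFunctions hh
  have hHcont : Continuous (hamiltonianField a b h) :=
    (hamiltonianField_mem_approxFlowFields a b hh).1
  have hfield := hamiltonianField_sub_const_mul_pow hβa hβb (β w) hhd
  obtain ⟨B, hB⟩ := hL.exists_bound_of_continuousOn
    (f := fun z => (β z - β w) • hamiltonianField a b h z) (by fun_prop)
  obtain ⟨θ, hθ0, hθ1, hθ⟩ := exists_lt_forall_norm_le hL hhd.continuous.continuousOn one_pos hhL
  have hlim : Tendsto (fun m : ℕ => θ ^ m * θ * ‖a‖ + (m * θ ^ m + θ ^ m) * B) atTop (𝓝 0) := by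
    have hpow := tendsto_pow_atTop_nhds_zero_of_lt_one hθ0 hθ1
    simpa using ((hpow.mul_const θ).mul_const ‖a‖).add
      (((tendsto_self_mul_const_pow_of_lt_one hθ0 hθ1).add hpow).mul_const B)
  obtain ⟨m, hm⟩ := (hlim.eventually (ge_mem_nhds hε)).exists
  refine ⟨hamiltonianField a b ((fun z => β z - β w) * h ^ (m + 1)),
    hamiltonianField_mem_approxFlowFields a b (mul_mem (sub_mem (coe_mem_polyFunctions β)
      ((polyFunctions E).algebraMap_mem (β w))) (pow_mem hh _)), by simp [hfield, hw],
    fun z hz => ?_⟩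
  rw [hfield]
  refine (norm_add_le _ _).trans (le_trans ?_ hm)
  rw [norm_smul, norm_smul, norm_mul, norm_pow, norm_pow, pow_succ, ← add_one_mul]
  have hcast : ‖(m + 1 : ℂ)‖ = m + 1 := by exact_mod_cast Complex.norm_natCast (m + 1)
  rw [hcast]
  gcongr
  exacts [hθ z hz, hθ z hz, hθ z hz, hB z hz]

end HamiltonianFields

section Reachability

open Filter Topology

variable {E : Type*} [NormedAddCommGroup E] [NormedSpace ℂ E]

/-- The points to which `p` can be moved, up to an arbitrarily small error, by a biholomorphism of
`E` that is arbitrarily close to the identity on a given compact subset of `U`. -/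
def reachable (U : Set E) (p : E) : Set E :=
  {q | ∀ L ⊆ U, IsCompact L → ∀ η > 0, ∃ A : E ≃ E, IsBiholo A ∧ ‖A p - q‖ < η ∧
    ∀ z ∈ L, ‖A z - z‖ < η}

theorem self_mem_reachable (U : Set E) (p : E) : p ∈ reachable U p :=
  fun _ _ _ η hη => ⟨Equiv.refl E, IsBiholo.refl, by simpa using hη, by simpa using fun _ _ => hη⟩

theorem isClosed_reachable (U : Set E) (p : E) : IsClosed (reachable U p) := by
  refine isClosed_of_closure_subset fun q hq L hLU hL η hη => ?_
  obtain ⟨q', hq', hqq'⟩ := Metric.mem_closure_iff.1 hq (η / 2) (by positivity)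
  obtain ⟨A, hA, hAp, hAL⟩ := hq' L hLU hL (η / 2) (by positivity)
  rw [dist_comm, dist_eq_norm] at hqq'
  exact ⟨A, hA, by linarith [norm_sub_le_norm_sub_add_norm_sub (A p) q' q],
    fun z hz => (hAL z hz).trans (half_lt_self hη)⟩

theorem mem_reachable_trans [ProperSpace E] {U : Set E} (hU : IsOpen U) {p q q' : E}
    (hq : q ∈ reachable U p) (hq' : q' ∈ reachable U q) : q' ∈ reachable U p := by
  intro L hLU hL η hη
  obtain ⟨δ, hδ, hδU⟩ := hL.exists_cthickening_subset_open hU hLU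
  obtain ⟨B, hB, hBq, hBL⟩ := hq' (cthickening δ L) hδU hL.cthickening (η / 2) (by positivity)
  obtain ⟨s, hs, hBs⟩ := Metric.continuous_iff.1 hB.differentiable.continuous q (η / 2)
    (by positivity)
  obtain ⟨A, hA, hAp, hAL⟩ := hq L hLU hL (min s (min δ (η / 2))) (by positivity)
  simp only [lt_min_iff] at hAp hAL
  refine ⟨A.trans B, hA.trans hB, ?_, fun z hz => ?_⟩
  · have hBA := hBs (A p) (by rw [dist_eq_norm]; exact hAp.1)
    rw [dist_eq_norm] at hBA
    exact (norm_sub_le_norm_sub_add_norm_sub (B (A p)) (B q) q').trans_lt (by linarith)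
  · obtain ⟨-, hAδ, hAη⟩ := hAL z hz
    have hAz : A z ∈ cthickening δ L :=
      mem_cthickening_of_dist_le _ z δ L hz (by rw [dist_eq_norm]; exact hAδ.le)
    exact (norm_sub_le_norm_sub_add_norm_sub (B (A z)) (A z) z).trans_lt
      (by linarith [hBL _ hAz])

theorem exists_nhds_forall_biholo_step [ProperSpace E] (hE : 1 < Module.finrank ℂ E) {f : E → ℂ}
    (hf : f ∈ polyFunctions E) {c : ℝ} (hc : 0 < c) {w₀ : E} (hw₀ : c ≤ ‖f w₀‖) {L : Set E}
    (hL : IsCompact L) (hfL : ∀ z ∈ L, ‖f z‖ < c) (v : E) {ε : ℝ} (hε : 0 < ε) :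
    ∃ s ∈ 𝓝 w₀, ∀ᶠ t : ℝ in 𝓝[>] 0, ∃ S : E ≃ E, IsBiholo S ∧
      (∀ w ∈ s, ‖S w - w - t • v‖ ≤ ε * t) ∧ ∀ z ∈ L, ‖S z - z‖ ≤ ε * t := by
  have hfw₀ : f w₀ ≠ 0 := norm_pos_iff.1 (hc.trans_le hw₀)
  obtain ⟨X, ⟨hX, A, hA⟩, hXw₀, hXL⟩ := exists_mem_approxFlowFields_apply_eq hE
    (h := (f w₀)⁻¹ • f) ((polyFunctions E).smul_mem hf _) (w := w₀) (by simp [hfw₀]) hL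
    (fun z hz => by
      rw [Pi.smul_apply, norm_smul, norm_inv, ← div_eq_inv_mul, div_lt_one (by positivity)]
      exact (hfL z hz).trans_le hw₀) v (half_pos hε)
  obtain ⟨r, hr, hXr⟩ := Metric.nhds_basis_closedBall.mem_iff.1
    ((hX.tendsto w₀).eventually (ball_mem_nhds _ (half_pos hε)))
  refine ⟨closedBall w₀ r, closedBall_mem_nhds _ hr, ?_⟩
  have hlim : Tendsto ((↑) : ℝ → ℂ) (𝓝[>] 0) (𝓝 0) :=
    tendsto_nhdsWithin_of_tendsto_nhds (by simpa using Complex.continuous_ofReal.tendsto 0)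
  have hstep := hlim.eventually (hA.eventually_norm_sub_le (closedBall w₀ r ∪ L)
    ((isCompact_closedBall w₀ r).union hL) (ε / 2) (half_pos hε))
  filter_upwards [hstep, self_mem_nhdsWithin] with t ht (ht0 : 0 < t)
  simp only [Complex.coe_smul, Complex.norm_real, Real.norm_of_nonneg ht0.le] at ht
  refine ⟨A t, hA.isBiholo t, fun w hw => ?_, fun z hz => ?_⟩
  · have hXw : ‖X w - v‖ < ε / 2 := mem_ball_iff_norm.1 (hXw₀ ▸ hXr hw)
    calc ‖A t w - w - t • v‖ = ‖(A t w - w - t • X w) + t • (X w - v)‖ := by congr 1; module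
      _ ≤ ε / 2 * t + t * (ε / 2) := by
        refine norm_add_le_of_le (ht w (.inl hw)) ?_
        rw [norm_smul, Real.norm_of_nonneg ht0.le]
        gcongr
      _ = ε * t := by ring
  · calc ‖A t z - z‖ ≤ ‖A t z - z - t • X z‖ + ‖t • X z‖ := norm_le_norm_sub_add _ _
      _ ≤ ε / 2 * t + t * (ε / 2) := by
        refine add_le_add (ht z (.inr hz)) ?_
        rw [norm_smul, Real.norm_of_nonneg ht0.le]
        gcongr
        exact hXL z hz
      _ = ε * t := by ring

theorem eventually_forall_biholo_step [ProperSpace E] (hE : 1 < Module.finrank ℂ E) {f : E → ℂ}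
    (hf : f ∈ polyFunctions E) {c : ℝ} (hc : 0 < c) {C : Set E} (hC : IsCompact C)
    (hfC : ∀ w ∈ C, c ≤ ‖f w‖) {L : Set E} (hL : IsCompact L)
    (hfL : ∀ z ∈ L, ‖f z‖ < c) (v : E) {ε : ℝ} (hε : 0 < ε) :
    ∀ᶠ t : ℝ in 𝓝[>] 0, ∀ w ∈ C, ∃ S : E ≃ E, IsBiholo S ∧
      ‖S w - w - t • v‖ ≤ ε * t ∧ ∀ z ∈ L, ‖S z - z‖ ≤ ε * t := by
  refine hC.induction_on (p := fun C => ∀ᶠ t : ℝ in 𝓝[>] 0, ∀ w ∈ C, ∃ S : E ≃ E, IsBiholo S ∧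
      ‖S w - w - t • v‖ ≤ ε * t ∧ ∀ z ∈ L, ‖S z - z‖ ≤ ε * t) (by simp)
    (fun s s' hss' hs' => hs'.mono fun t ht w hw => ht w (hss' hw))
    (fun s s' hs hs' => ?_) fun w₀ hw₀ => ?_
  · filter_upwards [hs, hs'] with t ht ht' w hw using hw.elim (ht w) (ht' w)
  · obtain ⟨s, hs, hstep⟩ := exists_nhds_forall_biholo_step hE hf hc (hfC w₀ hw₀) hL hfL v hε
    refine ⟨s, mem_nhdsWithin_of_mem_nhds hs, ?_⟩
    filter_upwards [hstep] with t ⟨S, hS, hSs, hSL⟩ w hw using ⟨S, hS, hSs w hw, hSL⟩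

theorem exists_biholo_of_forall_biholo_step {q v : E} {L : Set E} {ε t : ℝ} (hε : 0 ≤ ε)
    (ht : 0 ≤ t) (hstep : ∀ w ∈ closedBall q (‖v‖ + ε), ∃ S : E ≃ E, IsBiholo S ∧
      ‖S w - w - t • v‖ ≤ ε * t ∧ ∀ z ∈ cthickening ε L, ‖S z - z‖ ≤ ε * t) (j : ℕ)
    (hj : j * t ≤ 1) :
    ∃ A : E ≃ E, IsBiholo A ∧ ‖A q - q - (j * t) • v‖ ≤ ε * (j * t) ∧
      ∀ z ∈ L, ‖A z - z‖ ≤ ε * (j * t) := by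
  induction j with
  | zero => exact ⟨Equiv.refl E, IsBiholo.refl, by simp, by simp⟩
  | succ j ih =>
    push_cast at hj ⊢
    have hjt : j * t ≤ 1 := by linarith
    obtain ⟨A, hA, hAq, hAL⟩ := ih hjt
    have hAq' : A q ∈ closedBall q (‖v‖ + ε) := by
      have hv : ‖(j * t) • v‖ ≤ 1 * ‖v‖ := by
        rw [norm_smul, Real.norm_of_nonneg (by positivity)]
        gcongr
      rw [mem_closedBall_iff_norm]
      linarith [norm_le_norm_sub_add (A q - q) ((j * t) • v), mul_le_of_le_one_right hε hjt]
    obtain ⟨S, hS, hSq, hSL⟩ := hstep _ hAq'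
    refine ⟨A.trans S, hA.trans hS, ?_, fun z hz => ?_⟩
    · calc ‖S (A q) - q - ((j + 1) * t) • v‖
          = ‖(S (A q) - A q - t • v) + (A q - q - (j * t) • v)‖ := by congr 1; module
        _ ≤ ε * t + ε * (j * t) := norm_add_le_of_le hSq hAq
        _ = ε * ((j + 1) * t) := by ring
    · have hAz : A z ∈ cthickening ε L := mem_cthickening_of_dist_le _ z ε L hz
        (by rw [dist_eq_norm]; exact (hAL z hz).trans (mul_le_of_le_one_right hε hjt))
      calc ‖S (A z) - z‖ ≤ ‖S (A z) - A z‖ + ‖A z - z‖ :=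
            norm_sub_le_norm_sub_add_norm_sub _ _ _
        _ ≤ ε * t + ε * (j * t) := add_le_add (hSL _ hAz) (hAL z hz)
        _ = ε * ((j + 1) * t) := by ring

theorem ball_subset_reachable [ProperSpace E] (hE : 1 < Module.finrank ℂ E) {f : E → ℂ}
    (hf : f ∈ polyFunctions E) {c : ℝ} (hc : 0 < c) {q : E} {r : ℝ}
    (hfq : ∀ w ∈ ball q r, c ≤ ‖f w‖) :
    ball q r ⊆ reachable {z | ‖f z‖ < c} q := by
  intro q' hq' L hLU hL η hη
  have hU : IsOpen {z | ‖f z‖ < c} :=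
    isOpen_lt (differentiable_of_mem_polyFunctions hf).continuous.norm continuous_const
  obtain ⟨δ, hδ, hδU⟩ := hL.exists_cthickening_subset_open hU hLU
  obtain ⟨v, rfl⟩ : ∃ v, q' = q + v := ⟨q' - q, by simp⟩
  have hvr : 0 < r - ‖v‖ := by simpa using hq'
  obtain ⟨ε, hε, hεδ⟩ := exists_between (show 0 < min δ (min (r - ‖v‖) η) by positivity)
  simp only [lt_min_iff] at hεδ
  have hstep := eventually_forall_biholo_step hE hf hc (isCompact_closedBall q (‖v‖ + ε))
    (fun w hw => hfq w (closedBall_subset_ball (by linarith) hw)) hL.cthickening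
    (fun z hz => hδU (cthickening_mono hεδ.1.le L hz)) v hε
  have hlim : Tendsto (fun n : ℕ => ((n : ℝ))⁻¹) atTop (𝓝[>] 0) :=
    tendsto_inv_atTop_nhdsGT_zero.comp tendsto_natCast_atTop_atTop
  obtain ⟨n, hn, hn0⟩ := ((hlim.eventually hstep).and (eventually_ne_atTop 0)).exists
  have hn1 : n * (n : ℝ)⁻¹ = 1 := mul_inv_cancel₀ (Nat.cast_ne_zero.2 hn0)
  obtain ⟨A, hA, hAq, hAL⟩ :=
    exists_biholo_of_forall_biholo_step hε.le (by positivity) hn n hn1.le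
  rw [hn1, mul_one] at hAq hAL
  refine ⟨A, hA, ?_, fun z hz => (hAL z hz).trans_lt hεδ.2.2⟩
  rw [one_smul, sub_sub] at hAq
  exact hAq.trans_lt hεδ.2.2

theorem not_isBounded_reachable (hE : 1 < Module.finrank ℂ E) {f : E → ℂ}
    (hf : f ∈ polyFunctions E) {c : ℝ} (hc : 0 < c) {p : E} (hp : c < ‖f p‖) :
    ¬ Bornology.IsBounded (reachable {z | ‖f z‖ < c} p) := by
  intro hbdd
  have := FiniteDimensional.of_finrank_pos (zero_lt_one.trans hE)
  have := FiniteDimensional.proper ℂ E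
  have := Module.nontrivial_of_finrank_pos (zero_lt_one.trans hE)
  have hfd := differentiable_of_mem_polyFunctions hf
  have hU : IsOpen {z | ‖f z‖ < c} := isOpen_lt hfd.continuous.norm continuous_const
  have hW : IsOpen {z | c < ‖f z‖} := isOpen_lt continuous_const hfd.continuous.norm
  let V := reachable {z | ‖f z‖ < c} p ∩ {z | c < ‖f z‖}
  have hV : IsOpen V := isOpen_iff_mem_nhds.2 fun q ⟨hq, hfq⟩ => by
    obtain ⟨r, hr, hrW⟩ := Metric.isOpen_iff.1 hW q hfq
    filter_upwards [ball_mem_nhds q hr] with q' hq'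
    exact ⟨mem_reachable_trans hU hq
      (ball_subset_reachable hE hf hc (fun w hw => (hrW hw).le) hq'), hrW hq'⟩
  have hpV : p ∈ V := ⟨self_mem_reachable _ p, hp⟩
  obtain ⟨z, hz, hmax⟩ := Complex.exists_mem_frontier_isMaxOn_norm
    (hbdd.subset inter_subset_left) ⟨p, hpV⟩ (hfd.diffContOnCl (s := V))
  have hzV : z ∈ V := ⟨(isClosed_reachable _ p).closure_subset_iff.2 inter_subset_left hz.1,
    lt_of_lt_of_le hp (hmax (subset_closure hpV))⟩
  exact hz.2 (hV.interior_eq.symm ▸ hzV)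

theorem exists_isBiholo_forall_norm_lt (hE : 1 < Module.finrank ℂ E) {K : Set E}
    (hK : IsCompact K) {f : E → ℂ} (hf : f ∈ polyFunctions E) {p : E}
    (hp : f p ≠ 0) (hfp : ∀ z ∈ K, ‖f z‖ < ‖f p‖) :
    ∃ A : E ≃ E, IsBiholo A ∧ ∀ z ∈ K, ‖A z‖ < ‖A p‖ := by
  have hfK := (differentiable_of_mem_polyFunctions hf).continuous.continuousOn (s := K)
  obtain ⟨θ, hθ, hθp, hfθ⟩ := exists_lt_forall_norm_le hK hfK (norm_pos_iff.2 hp) hfp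
  obtain ⟨c, hθc, hcp⟩ := exists_between hθp
  obtain ⟨R, hR⟩ := hK.isBounded.exists_norm_le
  obtain ⟨q, hq, hRq⟩ : ∃ q ∈ reachable {z | ‖f z‖ < c} p, R + 2 < ‖q‖ := by
    by_contra! hbdd
    exact not_isBounded_reachable hE hf (hθ.trans_lt hθc) hcp
      (isBounded_iff_forall_norm_le.2 ⟨R + 2, hbdd⟩)
  obtain ⟨A, hA, hAp, hAK⟩ := hq K (fun z hz => (hfθ z hz).trans_lt hθc) hK 1 one_pos
  refine ⟨A, hA, fun z hz => ?_⟩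
  linarith [norm_le_insert' (A z) z, hAK z hz, hR z hz, norm_le_insert (A p) q]

end Reachability

theorem stmt_10_general {E : Type*} [NormedAddCommGroup E] [NormedSpace ℂ E]
    (hE : 1 < Module.finrank ℂ E) {K : Set E} (hK : IsCompact K) {f : E → ℂ}
    (hf : f ∈ polyFunctions E) {p : E} (hfp : ∀ z ∈ K, ‖f z‖ < ‖f p‖) :
    ∃ φ : E → E, Differentiable ℂ φ ∧ Function.Injective φ ∧ φ 0 = p ∧ ∀ ζ, φ ζ ∉ K := by
  rcases K.eq_empty_or_nonempty with rfl | ⟨z₀, hz₀⟩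
  · exact ⟨(· + p), differentiable_id.add_const p, add_left_injective p, zero_add p,
      fun _ => notMem_empty _⟩
  have hp : f p ≠ 0 := norm_pos_iff.1 ((norm_nonneg _).trans_lt (hfp z₀ hz₀))
  obtain ⟨A, hA, hAK⟩ := exists_isBiholo_forall_norm_lt hE hK hf hp hfp
  exact HasAvoidingMap.of_image hA <| hasAvoidingMap_of_forall_norm_lt hE
    (hK.image hA.differentiable.continuous) (forall_mem_image.2 hAK)

/-- For any `n > 1`, any compact polynomially convex set `K ⊆ ℂⁿ`, and any point
`p ∈ ℂⁿ \ K`, there exists an injective holomorphic map `φ : ℂⁿ → ℂⁿ` with `φ(0) = p` whose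
image is disjoint from `K`; hence `p` lies in a Fatou–Bieberbach domain contained in `ℂⁿ \ K`. -/
theorem stmt_10 (n : ℕ) (hn : 1 < n) (K : Set (EuclideanSpace ℂ (Fin n)))
    (hKc : IsCompact K) (hKpc : IsPolyConvex K) (p : EuclideanSpace ℂ (Fin n)) (hp : p ∉ K) :
    ∃ φ : EuclideanSpace ℂ (Fin n) → EuclideanSpace ℂ (Fin n),
      Differentiable ℂ φ ∧ Function.Injective φ ∧ φ 0 = p ∧
        ∀ ζ, φ ζ ∉ K := by
  have hp' : p ∉ polyHull K := by rwa [show polyHull K = K from hKpc]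
  obtain ⟨f, hf, hfp⟩ := exists_mem_polyFunctions_of_notMem_polyHull hKc hp'
  exact stmt_10_general (by simpa using hn) hKc hf hfp
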